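/- arXiv:2511.19494 — 5 statements merged into one kernel-verified Lean document; each statement's English description precedes it below -/
import Mathlib

section
/- Let G be a finite nilpotent group and let 0 < ε < 1 be a real number. If k is a natural number with k ≥ rank(G) + ⌈log₂(2/ε)⌉, then φ_k(G) ≥ 1 − ε. -/
/-- `genProb G k` is the probability that `k` independently and uniformly chosen random
elements of the finite group `G` generate `G`, i.e. the number of `k`-tuples whose generated
subgroup is all of `G`, divided by `|G|^k`. -/
noncomputable def genProb (G : Type*) [Group G] (k : ℕ) : ℝ :=
  (Nat.card {v : Fin k → G // Subgroup.closure (Set.range v) = ⊤} : ℝ) /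
    (Nat.card G : ℝ) ^ k

/-! A tuple fails to generate a finite group `G` iff all its entries lie in a common maximal
subgroup, so the probability of failure is at most the sum of `[G : M]⁻ᵏ` over the maximal
subgroups `M`. In a nilpotent group of rank `r` every maximal subgroup is normal of prime index;
those of index `p` are kernels of homomorphisms to the cyclic group of order `p`, of which there are
at most `p ^ r`, as a homomorphism is determined by its values on `r` generators. With `k = r + m`
the failure probability is therefore at most `∑ p⁻ᵐ` over the primes dividing `|G|`, and
`∑ p⁻ᵐ ≤ 2 * 2⁻ᵐ` when `m ≥ 2`. -/

section MaximalSubgroups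

variable (G : Type*) [Group G] [Finite G]

/-- The maximal subgroups of a finite group, as a `Finset` so that one can sum over them. -/
noncomputable def maximalSubgroups : Finset (Subgroup G) :=
  {M : Subgroup G | IsCoatom M}.toFinite.toFinset

variable {G} in
@[simp]
theorem mem_maximalSubgroups {M : Subgroup G} : M ∈ maximalSubgroups G ↔ IsCoatom M :=
  Set.Finite.mem_toFinset _

theorem one_sub_genProb (k : ℕ) :
    1 - genProb G k =
      {v : Fin k → G | Subgroup.closure (Set.range v) ≠ ⊤}.ncard / (Nat.card G : ℝ) ^ k := by
  have hsum := Set.ncard_add_ncard_compl {v : Fin k → G | Subgroup.closure (Set.range v) = ⊤}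
  rw [Nat.card_fun, Nat.card_fin] at hsum
  have hG : (Nat.card G : ℝ) ^ k ≠ 0 := pow_ne_zero _ (Nat.cast_ne_zero.mpr Nat.card_pos.ne')
  rw [genProb, one_sub_div hG, sub_eq_of_eq_add']
  exact_mod_cast hsum.symm

variable {G} in
theorem ncard_pi_subgroup_div (H : Subgroup G) (k : ℕ) :
    (Set.univ.pi fun _ : Fin k ↦ (H : Set G)).ncard / (Nat.card G : ℝ) ^ k =
      ((H.index : ℝ) ^ k)⁻¹ := by
  have hH : (Nat.card H : ℝ) ≠ 0 := Nat.cast_ne_zero.mpr Nat.card_pos.ne'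
  have hncard : (Set.univ.pi fun _ : Fin k ↦ (H : Set G)).ncard = Nat.card H ^ k := by
    rw [← Nat.card_coe_set_eq, Nat.card_congr (Equiv.Set.univPi _)]
    simp [Nat.card_fun]
  rw [hncard, ← H.card_mul_index, Nat.cast_pow, Nat.cast_mul, mul_pow,
    div_mul_cancel_left₀ (pow_ne_zero k hH)]

theorem one_sub_genProb_le_sum_maximalSubgroups (k : ℕ) :
    1 - genProb G k ≤ ∑ M ∈ maximalSubgroups G, ((M.index : ℝ) ^ k)⁻¹ := by
  have hsub : {v : Fin k → G | Subgroup.closure (Set.range v) ≠ ⊤} ⊆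
      ⋃ M ∈ maximalSubgroups G, Set.univ.pi fun _ ↦ (M : Set G) := by
    intro v hv
    obtain ⟨M, hM, hvM⟩ := (eq_top_or_exists_le_coatom _).resolve_left hv
    exact Set.mem_biUnion (mem_maximalSubgroups.mpr hM)
      fun i _ ↦ hvM (Subgroup.subset_closure ⟨i, rfl⟩)
  have hunion := (Set.ncard_le_ncard hsub).trans (Finset.set_ncard_biUnion_le _ _)
  calc 1 - genProb G k
      ≤ (∑ M ∈ maximalSubgroups G, (Set.univ.pi fun _ : Fin k ↦ (M : Set G)).ncard : ℕ) /
          (Nat.card G : ℝ) ^ k := by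
        rw [one_sub_genProb]
        gcongr
    _ = ∑ M ∈ maximalSubgroups G, ((M.index : ℝ) ^ k)⁻¹ := by
        simp_rw [Nat.cast_sum, Finset.sum_div, ncard_pi_subgroup_div]

end MaximalSubgroups

section NormalSubgroups

variable {G : Type*} [Group G]

theorem isSimpleGroup_quotient_of_isCoatom {M : Subgroup G} [M.Normal] (hM : IsCoatom M) :
    IsSimpleGroup (G ⧸ M) := by
  let e : Subgroup (G ⧸ M) ≃o Set.Ici M := QuotientGroup.comapMk'OrderIso M
  have : IsSimpleOrder (Subgroup (G ⧸ M)) :=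
    e.isSimpleOrder_iff.mpr (Set.isSimpleOrder_Ici_iff_isCoatom.mpr hM)
  exact { exists_pair_ne := (Subgroup.nontrivial_iff.mp this.toNontrivial).exists_pair_ne
          eq_bot_or_eq_top_of_normal := fun H _ ↦ eq_bot_or_eq_top H }

theorem normal_of_isCoatom [Group.IsNilpotent G] {M : Subgroup G} (hM : IsCoatom M) : M.Normal :=
  Subgroup.NormalizerCondition.normal_of_coatom M Group.normalizerCondition_of_isNilpotent hM

theorem prime_index_of_isCoatom [Group.IsNilpotent G] {M : Subgroup G} (hM : IsCoatom M) :
    M.index.Prime := by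
  have : M.Normal := normal_of_isCoatom hM
  have : IsSimpleGroup (G ⧸ M) := isSimpleGroup_quotient_of_isCoatom hM
  exact IsSimpleGroup.prime_card

theorem exists_ker_eq_of_index_eq_prime {p : ℕ} [Fact p.Prime] {N : Subgroup G} [N.Normal]
    (hN : N.index = p) : ∃ f : G →* Multiplicative (ZMod p), f.ker = N := by
  let e : G ⧸ N ≃* Multiplicative (ZMod p) := mulEquivOfPrimeCardEq hN (Nat.card_zmod p)
  exact ⟨(e : G ⧸ N →* Multiplicative (ZMod p)).comp (QuotientGroup.mk' N), by
    rw [MonoidHom.ker_mulEquiv_comp, QuotientGroup.ker_mk']⟩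

variable (G) [Group.FG G]

theorem exists_finset_card_eq_rank_injective_restrict (A : Type*) [Monoid A] :
    ∃ S : Finset G, S.card = Group.rank G ∧
      Function.Injective fun (f : G →* A) (s : S) ↦ f s := by
  obtain ⟨S, hcard, hclosure⟩ := Group.rank_spec G
  exact ⟨S, hcard, fun f g hfg ↦
    MonoidHom.eq_of_eqOn_dense hclosure fun s hs ↦ congrFun hfg ⟨s, hs⟩⟩

theorem finite_monoidHom (A : Type*) [Monoid A] [Finite A] : Finite (G →* A) :=
  let ⟨_, _, hinj⟩ := exists_finset_card_eq_rank_injective_restrict G A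
  Finite.of_injective _ hinj

theorem card_monoidHom_le_card_pow_rank (A : Type*) [Monoid A] [Finite A] :
    Nat.card (G →* A) ≤ Nat.card A ^ Group.rank G := by
  obtain ⟨S, hcard, hinj⟩ := exists_finset_card_eq_rank_injective_restrict G A
  simpa [Nat.card_fun, hcard] using Nat.card_le_card_of_injective _ hinj

theorem ncard_normal_index_eq_prime_le {p : ℕ} (hp : p.Prime) :
    {N : Subgroup G | N.Normal ∧ N.index = p}.ncard ≤ p ^ Group.rank G := by
  have : Fact p.Prime := ⟨hp⟩
  have : Finite (G →* Multiplicative (ZMod p)) := finite_monoidHom G _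
  have hsub : {N : Subgroup G | N.Normal ∧ N.index = p} ⊆
      Set.range (MonoidHom.ker : (G →* Multiplicative (ZMod p)) → Subgroup G) := by
    rintro N ⟨_, hN⟩
    exact exists_ker_eq_of_index_eq_prime hN
  calc {N : Subgroup G | N.Normal ∧ N.index = p}.ncard
      ≤ (Set.range (MonoidHom.ker : (G →* Multiplicative (ZMod p)) → Subgroup G)).ncard :=
        Set.ncard_le_ncard hsub
    _ ≤ Nat.card (G →* Multiplicative (ZMod p)) := Finite.card_range_le _
    _ ≤ p ^ Group.rank G := by
        simpa using card_monoidHom_le_card_pow_rank G (Multiplicative (ZMod p))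

end NormalSubgroups

section PrimeSums

theorem sum_range_inv_sq_two_mul_add_three_le (n : ℕ) :
    ∑ j ∈ Finset.range n, (((2 * j + 3 : ℕ) : ℝ) ^ 2)⁻¹ ≤ 1 / 4 := by
  -- The identity behind this bound is `4 (j + 1) (j + 2) = (2 j + 3) ^ 2 - 1`.
  have hterm (j : ℕ) : (((2 * j + 3 : ℕ) : ℝ) ^ 2)⁻¹ ≤
      (4 * ((j : ℝ) + 1))⁻¹ - (4 * (((j + 1 : ℕ) : ℝ) + 1))⁻¹ := by
    push_cast
    rw [inv_sub_inv (by positivity) (by positivity), inv_eq_one_div,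
      div_le_div_iff₀ (by positivity) (by positivity)]
    nlinarith
  calc ∑ j ∈ Finset.range n, (((2 * j + 3 : ℕ) : ℝ) ^ 2)⁻¹
      ≤ ∑ j ∈ Finset.range n, ((4 * ((j : ℝ) + 1))⁻¹ - (4 * (((j + 1 : ℕ) : ℝ) + 1))⁻¹) :=
        Finset.sum_le_sum fun j _ ↦ hterm j
    _ = 1 / 4 - (4 * ((n : ℝ) + 1))⁻¹ := by
        rw [Finset.sum_range_sub' fun j : ℕ ↦ (4 * ((j : ℝ) + 1))⁻¹]
        norm_num
    _ ≤ 1 / 4 := sub_le_self _ (by positivity)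

theorem sum_inv_sq_le_of_forall_odd {S : Finset ℕ} (hodd : ∀ n ∈ S, Odd n) (hone : 1 ∉ S) :
    ∑ n ∈ S, ((n : ℝ) ^ 2)⁻¹ ≤ 1 / 4 := by
  obtain ⟨N, hN⟩ := S.exists_le
  have hsub : S ⊆ (Finset.range N).image fun j ↦ 2 * j + 3 := by
    intro n hn
    obtain ⟨j, rfl⟩ := hodd n hn
    have hj : j ≠ 0 := by
      rintro rfl
      exact hone hn
    have hle := hN _ hn
    exact Finset.mem_image.mpr ⟨j - 1, Finset.mem_range.mpr (by omega), by omega⟩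
  calc ∑ n ∈ S, ((n : ℝ) ^ 2)⁻¹
      ≤ ∑ n ∈ ((Finset.range N).image fun j ↦ 2 * j + 3 : Finset ℕ), ((n : ℝ) ^ 2)⁻¹ :=
        Finset.sum_le_sum_of_subset_of_nonneg hsub fun _ _ _ ↦ by positivity
    _ = ∑ j ∈ Finset.range N, (((2 * j + 3 : ℕ) : ℝ) ^ 2)⁻¹ :=
        Finset.sum_image fun _ _ _ _ h ↦ by simpa using h
    _ ≤ 1 / 4 := sum_range_inv_sq_two_mul_add_three_le N

theorem sum_inv_sq_le_of_forall_prime {S : Finset ℕ} (hS : ∀ p ∈ S, p.Prime) :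
    ∑ p ∈ S, ((p : ℝ) ^ 2)⁻¹ ≤ 1 / 2 := by
  have hodd : ∑ p ∈ S.erase 2, ((p : ℝ) ^ 2)⁻¹ ≤ 1 / 4 := by
    refine sum_inv_sq_le_of_forall_odd (fun p hp ↦ ?_)
      fun h ↦ Nat.not_prime_one (hS 1 (Finset.mem_of_mem_erase h))
    exact (hS p (Finset.mem_of_mem_erase hp)).odd_of_ne_two (Finset.ne_of_mem_erase hp)
  calc ∑ p ∈ S, ((p : ℝ) ^ 2)⁻¹
      ≤ ∑ p ∈ insert 2 (S.erase 2), ((p : ℝ) ^ 2)⁻¹ :=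
        Finset.sum_le_sum_of_subset_of_nonneg (Finset.insert_erase_subset 2 S)
          fun _ _ _ ↦ by positivity
    _ = 1 / 4 + ∑ p ∈ S.erase 2, ((p : ℝ) ^ 2)⁻¹ := by
        rw [Finset.sum_insert (Finset.notMem_erase 2 S)]
        norm_num
    _ ≤ 1 / 2 := by linarith

theorem sum_inv_pow_le_of_forall_prime {S : Finset ℕ} (hS : ∀ p ∈ S, p.Prime) {m : ℕ} (hm : 2 ≤ m) :
    ∑ p ∈ S, ((p : ℝ) ^ m)⁻¹ ≤ 2 / 2 ^ m := by
  obtain ⟨n, rfl⟩ := Nat.exists_eq_add_of_le hm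
  have hterm : ∀ p ∈ S, ((p : ℝ) ^ (2 + n))⁻¹ ≤ ((p : ℝ) ^ 2)⁻¹ * (2 ^ n)⁻¹ := by
    intro p hp
    have htwo : (2 : ℝ) ≤ p := mod_cast (hS p hp).two_le
    rw [pow_add, mul_inv]
    gcongr
  calc ∑ p ∈ S, ((p : ℝ) ^ (2 + n))⁻¹
      ≤ (∑ p ∈ S, ((p : ℝ) ^ 2)⁻¹) * (2 ^ n)⁻¹ :=
        (Finset.sum_le_sum hterm).trans_eq (Finset.sum_mul ..).symm
    _ ≤ 1 / 2 * (2 ^ n)⁻¹ := by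
        gcongr
        exact sum_inv_sq_le_of_forall_prime hS
    _ = 2 / 2 ^ (2 + n) := by
        rw [pow_add]
        field_simp

end PrimeSums

section Nilpotent

variable (G : Type*) [Group G] [Finite G] [Group.IsNilpotent G]

theorem card_maximalSubgroups_index_eq_prime_le {p : ℕ} (hp : p.Prime) :
    {M ∈ maximalSubgroups G | M.index = p}.card ≤ p ^ Group.rank G := by
  rw [← Set.ncard_coe_finset]
  refine (Set.ncard_le_ncard fun M hM ↦ ?_).trans (ncard_normal_index_eq_prime_le G hp)
  obtain ⟨hM, hindex⟩ := Finset.mem_filter.mp hM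
  exact ⟨normal_of_isCoatom (mem_maximalSubgroups.mp hM), hindex⟩

theorem one_sub_genProb_le_sum_primeFactors (k : ℕ) :
    1 - genProb G k ≤ ∑ p ∈ (Nat.card G).primeFactors, (p : ℝ) ^ Group.rank G / (p : ℝ) ^ k := by
  have hmaps : ∀ M ∈ maximalSubgroups G, M.index ∈ (Nat.card G).primeFactors := fun M hM ↦
    Nat.mem_primeFactors.mpr ⟨prime_index_of_isCoatom (mem_maximalSubgroups.mp hM),
      M.index_dvd_card, Nat.card_pos.ne'⟩
  calc 1 - genProb G k
      ≤ ∑ M ∈ maximalSubgroups G, ((M.index : ℝ) ^ k)⁻¹ :=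
        one_sub_genProb_le_sum_maximalSubgroups G k
    _ = ∑ p ∈ (Nat.card G).primeFactors,
          {M ∈ maximalSubgroups G | M.index = p}.card * ((p : ℝ) ^ k)⁻¹ := by
        rw [← Finset.sum_fiberwise_of_maps_to' hmaps fun p ↦ ((p : ℝ) ^ k)⁻¹]
        simp only [Finset.sum_const, nsmul_eq_mul]
    _ ≤ ∑ p ∈ (Nat.card G).primeFactors, (p : ℝ) ^ Group.rank G / (p : ℝ) ^ k := by
        simp_rw [div_eq_mul_inv]
        gcongr with p hp
        exact_mod_cast card_maximalSubgroups_index_eq_prime_le G (Nat.prime_of_mem_primeFactors hp)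

theorem one_sub_genProb_rank_add_le {m : ℕ} (hm : 2 ≤ m) :
    1 - genProb G (Group.rank G + m) ≤ 2 / 2 ^ m := by
  have hprime : ∀ p ∈ (Nat.card G).primeFactors, p.Prime := fun _ ↦ Nat.prime_of_mem_primeFactors
  calc 1 - genProb G (Group.rank G + m)
      ≤ ∑ p ∈ (Nat.card G).primeFactors,
          (p : ℝ) ^ Group.rank G / (p : ℝ) ^ (Group.rank G + m) :=
        one_sub_genProb_le_sum_primeFactors G _
    _ = ∑ p ∈ (Nat.card G).primeFactors, ((p : ℝ) ^ m)⁻¹ := by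
        refine Finset.sum_congr rfl fun p hp ↦ ?_
        have hp0 : (p : ℝ) ≠ 0 := Nat.cast_ne_zero.mpr (hprime p hp).ne_zero
        rw [pow_add, div_mul_cancel_left₀ (pow_ne_zero _ hp0)]
    _ ≤ 2 / 2 ^ m := sum_inv_pow_le_of_forall_prime hprime hm

end Nilpotent

theorem nilpotent_genProb_rank_bound (G : Type*) [Group G] [Finite G] [Group.IsNilpotent G]
    (ε : ℝ) (hε0 : 0 < ε) (hε1 : ε < 1) (k : ℕ)
    (hk : (Group.rank G : ℤ) + ⌈Real.logb 2 (2 / ε)⌉ ≤ (k : ℤ)) :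
    1 - ε ≤ genProb G k := by
  have hlog : 1 < Real.logb 2 (2 / ε) := by
    rw [Real.lt_logb_iff_rpow_lt one_lt_two (by positivity), Real.rpow_one]
    exact (lt_div_iff₀ hε0).mpr (mul_lt_of_lt_one_right two_pos hε1)
  have hceil : 1 < ⌈Real.logb 2 (2 / ε)⌉ := Int.lt_ceil.mpr (mod_cast hlog)
  obtain ⟨m, rfl⟩ : ∃ m, k = Group.rank G + m := Nat.exists_eq_add_of_le (by omega)
  have hlogm : Real.logb 2 (2 / ε) ≤ m :=
    mod_cast Int.ceil_le.mp (show ⌈Real.logb 2 (2 / ε)⌉ ≤ (m : ℤ) by omega)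
  have hpow : 2 / ε ≤ 2 ^ m := by
    rwa [Real.logb_le_iff_le_rpow one_lt_two (by positivity), Real.rpow_natCast] at hlogm
  have hbound : 2 / 2 ^ m ≤ ε := (div_le_comm₀ hε0 (by positivity)).mp hpow
  exact sub_le_comm.mp ((one_sub_genProb_rank_add_le G (by omega)).trans hbound)
end

section
/- Let G be a finite nilpotent group and let 0 < ε < 1 be a real number. If k is a natural number with k ≥ Ω(|G|) + ⌈log₂(1/ε)⌉, then φ_k(G) ≥ 1 − ε. -/
/-!
The idea is to lift generation along a chief series. Let `N` be a minimal normal subgroup of a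
finite solvable group `G`, so that `N` is abelian. If a tuple generates `G` modulo `N` but not `G`
itself, then it generates a complement of `N`. A complement `H` is determined by its
representatives of the cosets in a generating set of `G ⧸ N`, which can be chosen of size at most
`m = Ω(|G ⧸ N|)` because each irredundant generator strictly enlarges the subgroup. So there are at
most `|N| ^ m` complements, and each contains a proportion `|N| ^ (-k)` of all `k`-tuples. Hence
passing from `G ⧸ N` to `G` costs a probability of at most `|N| ^ (m - k)`, which is at most
`2 ^ (m - k)` unless `k < m`, where the latter exceeds `1`. Over a chief series these costs sum to
at most `2 ^ (Ω(|G|) - k)`.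
-/

open ArithmeticFunction (cardFactors)

lemma cardFactors_lt_cardFactors_of_dvd {m n : ℕ} (hn : n ≠ 0) (hmn : m ∣ n) (hne : m ≠ n) :
    cardFactors m < cardFactors n := by
  obtain ⟨c, rfl⟩ := hmn
  obtain ⟨hm, hc⟩ := mul_ne_zero_iff.1 hn
  have hc1 : c ≠ 1 := fun h => hne (by rw [h, mul_one])
  rw [ArithmeticFunction.cardFactors_mul hm hc, lt_add_iff_pos_right,
    ArithmeticFunction.cardFactors_pos_iff_one_lt]
  exact Nat.one_lt_iff_ne_zero_and_ne_one.2 ⟨hc, hc1⟩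

lemma pow_div_pow_le_pow_div_pow {R : Type*} [Field R] [LinearOrder R] [IsStrictOrderedRing R]
    {a b : R} {m k : ℕ} (ha : 0 < a) (hab : a ≤ b) (hmk : m ≤ k) :
    b ^ m / b ^ k ≤ a ^ m / a ^ k := by
  obtain ⟨d, rfl⟩ := Nat.exists_eq_add_of_le hmk
  have hb := ha.trans_le hab
  rw [pow_add, pow_add, div_mul_cancel_left₀ (by positivity), div_mul_cancel_left₀ (by positivity)]
  gcongr

section Group

variable {G : Type*} [Group G]

lemma cardFactors_card_lt_cardFactors_card [Finite G] {H K : Subgroup G} (h : H < K) :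
    cardFactors (Nat.card H) < cardFactors (Nat.card K) :=
  cardFactors_lt_cardFactors_of_dvd Nat.card_pos.ne' (Subgroup.card_dvd_of_le h.le)
    fun hcard => h.ne (Subgroup.eq_of_le_of_card_ge h.le hcard.ge)

lemma cardFactors_card_quotient_lt [Finite G] {N : Subgroup G} (hN : N ≠ ⊥) :
    cardFactors (Nat.card (G ⧸ N)) < cardFactors (Nat.card G) := by
  have hlt : Nat.card (G ⧸ N) < Nat.card G := by
    rw [Subgroup.card_eq_card_quotient_mul_card_subgroup N]
    exact lt_mul_of_one_lt_right Nat.card_pos (N.one_lt_card_iff_ne_bot.2 hN)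
  exact cardFactors_lt_cardFactors_of_dvd Nat.card_pos.ne' N.card_quotient_dvd_card hlt.ne

variable (G) in
lemma rank_le_cardFactors_card [Finite G] : Group.rank G ≤ cardFactors (Nat.card G) := by
  classical
  let P : Set (Finset G) := {S | S.card ≤ cardFactors (Nat.card (Subgroup.closure (S : Set G)))}
  obtain ⟨S, hS⟩ := P.toFinite.exists_maximal ⟨∅, by simp [P]⟩
  have hScard : S.card ≤ cardFactors (Nat.card (Subgroup.closure (S : Set G))) := hS.prop
  have htop : Subgroup.closure (S : Set G) = ⊤ := by
    by_contra hne
    obtain ⟨x, -, hx⟩ := SetLike.exists_of_lt (lt_top_iff_ne_top.2 hne)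
    have hlt : Subgroup.closure (S : Set G) < Subgroup.closure (insert x S : Set G) :=
      SetLike.lt_iff_le_and_exists.2 ⟨Subgroup.closure_mono (Set.subset_insert x S), x,
        Subgroup.subset_closure (Set.mem_insert x S), hx⟩
    have hinsert : insert x S ∈ P := by
      have := cardFactors_card_lt_cardFactors_card hlt
      simp only [P, Set.mem_ofPred_eq, Finset.coe_insert]
      exact (Finset.card_insert_le x S).trans (by omega)
    exact hx (Subgroup.subset_closure
      (hS.le_of_ge hinsert (Finset.subset_insert x S) (Finset.mem_insert_self x S)))
  calc Group.rank G ≤ S.card := Group.rank_le htop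
    _ ≤ cardFactors (Nat.card G) := by rwa [htop, Subgroup.card_top] at hScard

lemma map_mk'_eq_top_iff {N : Subgroup G} [N.Normal] {H : Subgroup G} :
    H.map (QuotientGroup.mk' N) = ⊤ ↔ H ⊔ N = ⊤ := by
  rw [← (Subgroup.comap_injective (QuotientGroup.mk'_surjective N)).eq_iff,
    QuotientGroup.comap_map_mk', Subgroup.comap_top, sup_comm]

lemma closure_range_mk_eq_top_iff {ι : Type*} {N : Subgroup G} [N.Normal] {v : ι → G} :
    Subgroup.closure (Set.range fun i => (v i : G ⧸ N)) = ⊤ ↔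
      Subgroup.closure (Set.range v) ⊔ N = ⊤ := by
  rw [← map_mk'_eq_top_iff, MonoidHom.map_closure, ← Set.range_comp]
  rfl

lemma eq_of_le_of_sup_eq_top_of_disjoint {N K H : Subgroup G} [N.Normal] (hKH : K ≤ H)
    (hsup : K ⊔ N = ⊤) (hdisj : Disjoint H N) : K = H := by
  refine le_antisymm hKH fun h hh => ?_
  obtain ⟨x, hx, n, hn, rfl⟩ := Subgroup.mem_sup_of_normal_right.1 (hsup ▸ Subgroup.mem_top h)
  have hn1 : n = 1 :=
    Subgroup.disjoint_def.1 hdisj ((Subgroup.mul_mem_cancel_left _ (hKH hx)).1 hh) hn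
  rwa [hn1, mul_one]

lemma isComplement'_of_disjoint_of_sup_eq_top {N H : Subgroup G} [N.Normal] (hdisj : Disjoint H N)
    (hsup : H ⊔ N = ⊤) : H.IsComplement' N :=
  Subgroup.isComplement'_of_disjoint_and_mul_eq_univ hdisj
    (by rw [← Subgroup.mul_normal, hsup, Subgroup.coe_top])

lemma card_isComplement'_le [Finite G] (N : Subgroup G) [N.Normal] :
    Nat.card {H : Subgroup G // H.IsComplement' N} ≤ Nat.card N ^ Group.rank (G ⧸ N) := by
  obtain ⟨S, hScard, hS⟩ := Group.rank_spec (G ⧸ N)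
  have hrep (H : {H : Subgroup G // H.IsComplement' N}) (s : S) :
      ∃ n : N, s.1.out * n ∈ H.1 := by
    obtain ⟨h, hh, n, hn, hhn⟩ :=
      Subgroup.mem_sup_of_normal_right.1 (H.2.sup_eq_top ▸ Subgroup.mem_top s.1.out)
    exact ⟨⟨n⁻¹, inv_mem hn⟩, by simpa [← hhn] using hh⟩
  choose rep hrep using hrep
  have hinj : Function.Injective rep := by
    intro H K hHK
    let L : Subgroup G := Subgroup.closure (Set.range fun s : S => s.1.out * (rep H s : G))
    have hL : L ⊔ N = ⊤ := by
      rw [← closure_range_mk_eq_top_iff, ← hS]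
      congr 1
      simp [QuotientGroup.mk_mul_of_mem]
    have hLH : L ≤ H := (Subgroup.closure_le _).2 (Set.range_subset_iff.2 (hrep H))
    have hLK : L ≤ K := (Subgroup.closure_le _).2 (Set.range_subset_iff.2 (hHK ▸ hrep K))
    exact Subtype.ext <| (eq_of_le_of_sup_eq_top_of_disjoint hLH hL H.2.disjoint).symm.trans
      (eq_of_le_of_sup_eq_top_of_disjoint hLK hL K.2.disjoint)
  calc Nat.card {H : Subgroup G // H.IsComplement' N}
      ≤ Nat.card (S → N) := Nat.card_le_card_of_injective rep hinj
    _ = Nat.card N ^ Group.rank (G ⧸ N) := by simp [Nat.card_fun, hScard]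

/-- A minimal normal subgroup: a minimal element among the nontrivial normal subgroups. It is a
class so that the quotient by it can be formed without further hypotheses. -/
class IsMinimalNormal (N : Subgroup G) : Prop extends N.Normal where
  ne_bot : N ≠ ⊥
  eq_bot_or_eq_of_le (K : Subgroup G) (hK : K.Normal) (hKN : K ≤ N) : K = ⊥ ∨ K = N

variable (G) in
lemma exists_isMinimalNormal [Finite G] [Nontrivial G] : ∃ N : Subgroup G, IsMinimalNormal N := by
  obtain ⟨N, hN⟩ := (Set.toFinite {N : Subgroup G | N.Normal ∧ N ≠ ⊥}).exists_minimal
    ⟨⊤, inferInstance, top_ne_bot⟩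
  exact ⟨N, { hN.prop.1 with
    ne_bot := hN.prop.2
    eq_bot_or_eq_of_le := fun K hK hKN =>
      or_iff_not_imp_left.2 fun hK0 => hN.eq_of_le ⟨hK, hK0⟩ hKN }⟩

lemma IsMinimalNormal.isMulCommutative [Group.IsSolvable G] (N : Subgroup G)
    [hN : IsMinimalNormal N] : IsMulCommutative N := by
  have hlt : ⁅N, N⁆ < N := Group.IsSolvable.commutator_lt_of_ne_bot hN.ne_bot
  have hbot : ⁅N, N⁆ = ⊥ :=
    (hN.eq_bot_or_eq_of_le _ inferInstance hlt.le).resolve_right hlt.ne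
  rwa [Subgroup.commutator_eq_bot_iff_le_centralizer,
    Subgroup.le_centralizer_iff_isMulCommutative] at hbot

lemma inf_normal_of_sup_eq_top {N H : Subgroup G} [N.Normal] [IsMulCommutative N]
    (hsup : H ⊔ N = ⊤) : (H ⊓ N).Normal := by
  have hH : H ≤ Subgroup.normalizer (H ⊓ N : Subgroup G) :=
    (le_inf Subgroup.le_normalizer Subgroup.le_normalizer_of_normal).trans
      Subgroup.inf_normalizer_le_normalizer_inf
  have hN : N ≤ Subgroup.normalizer (H ⊓ N : Subgroup G) :=
    (N.le_centralizer.trans (Subgroup.centralizer_le inf_le_right)).trans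
      (Subgroup.centralizer_le_normalizer _)
  rw [← Subgroup.normalizer_eq_top_iff, eq_top_iff, ← hsup]
  exact sup_le hH hN

lemma IsMinimalNormal.isComplement'_of_sup_eq_top {N H : Subgroup G} [hN : IsMinimalNormal N]
    [IsMulCommutative N] (hsup : H ⊔ N = ⊤) (hH : H ≠ ⊤) : H.IsComplement' N := by
  refine isComplement'_of_disjoint_of_sup_eq_top (disjoint_iff.2 ?_) hsup
  refine (hN.eq_bot_or_eq_of_le _ (inf_normal_of_sup_eq_top hsup) inf_le_right).resolve_right
    fun hinf => hH ?_
  rwa [sup_eq_left.2 (inf_eq_right.1 hinf)] at hsup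

lemma ncard_preimage_mk_comp {ι : Type*} [Finite ι] (N : Subgroup G) (s : Set (ι → G ⧸ N)) :
    ((fun (v : ι → G) i => (v i : G ⧸ N)) ⁻¹' s).ncard = s.ncard * Nat.card N ^ Nat.card ι := by
  let e : (ι → G) ≃ (ι → G ⧸ N) × (ι → N) :=
    (Equiv.arrowCongr (Equiv.refl ι) Subgroup.groupEquivQuotientProdSubgroup).trans
      (Equiv.arrowProdEquivProdArrow ι _ _)
  have he (v : ι → G) : (e v).1 = fun i => (v i : G ⧸ N) := rfl
  rw [← Nat.card_coe_set_eq, ← Nat.card_coe_set_eq, ← Nat.card_fun, ← Nat.card_prod]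
  exact Nat.card_congr ((e.subtypeEquiv fun v => by rw [he]; rfl).trans
    (Equiv.prodSubtypeFstEquivSubtypeProd (p := (· ∈ s))))

lemma ncard_forall_mem {ι : Type*} [Finite ι] (H : Subgroup G) :
    {v : ι → G | ∀ i, v i ∈ H}.ncard = Nat.card H ^ Nat.card ι := by
  rw [← Nat.card_fun]
  exact Nat.card_congr Equiv.subtypePiEquivPi

lemma ncard_iUnion_isComplement'_le {ι : Type*} [Finite ι] [Finite G] (N : Subgroup G)
    [N.Normal] :
    (⋃ H : {H : Subgroup G // H.IsComplement' N}, {v : ι → G | ∀ i, v i ∈ H.1}).ncard ≤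
      Nat.card N ^ Group.rank (G ⧸ N) * Nat.card (G ⧸ N) ^ Nat.card ι := by
  have := Fintype.ofFinite {H : Subgroup G // H.IsComplement' N}
  have hcard (H : {H : Subgroup G // H.IsComplement' N}) :
      {v : ι → G | ∀ i, v i ∈ H.1}.ncard = Nat.card (G ⧸ N) ^ Nat.card ι := by
    rw [ncard_forall_mem, ← H.2.index_eq_card, Subgroup.index]
  calc _ ≤ ∑ H : {H : Subgroup G // H.IsComplement' N}, {v : ι → G | ∀ i, v i ∈ H.1}.ncard :=
        Set.ncard_iUnion_le_of_fintype _
    _ = Nat.card {H : Subgroup G // H.IsComplement' N} * Nat.card (G ⧸ N) ^ Nat.card ι := by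
        simp only [hcard, Finset.sum_const, Finset.card_univ, smul_eq_mul,
          Nat.card_eq_fintype_card]
    _ ≤ _ := Nat.mul_le_mul_right _ (card_isComplement'_le N)

lemma ncard_closure_range_quotient_eq_top_mul_le {ι : Type*} [Finite ι] [Finite G]
    (N : Subgroup G) [IsMinimalNormal N] [IsMulCommutative N] :
    {w : ι → G ⧸ N | Subgroup.closure (Set.range w) = ⊤}.ncard * Nat.card N ^ Nat.card ι ≤
      {v : ι → G | Subgroup.closure (Set.range v) = ⊤}.ncard +
        Nat.card N ^ Group.rank (G ⧸ N) * Nat.card (G ⧸ N) ^ Nat.card ι := by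
  have hcover : {v : ι → G | Subgroup.closure (Set.range fun i => (v i : G ⧸ N)) = ⊤} ⊆
      {v | Subgroup.closure (Set.range v) = ⊤} ∪
        ⋃ H : {H : Subgroup G // H.IsComplement' N}, {v | ∀ i, v i ∈ H.1} := by
    intro v hv
    refine or_iff_not_imp_left.2 fun hgen => Set.mem_iUnion.2 ⟨⟨_,
      IsMinimalNormal.isComplement'_of_sup_eq_top (closure_range_mk_eq_top_iff.1 hv) hgen⟩,
      fun i => Subgroup.subset_closure (Set.mem_range_self i)⟩
  rw [← ncard_preimage_mk_comp]
  exact (Set.ncard_le_ncard hcover).trans ((Set.ncard_union_le _ _).trans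
    (Nat.add_le_add_left (ncard_iUnion_isComplement'_le N) _))

variable (G) in
lemma genProb_eq_ncard_div (k : ℕ) : genProb G k =
    ({v : Fin k → G | Subgroup.closure (Set.range v) = ⊤}.ncard : ℝ) / (Nat.card G : ℝ) ^ k :=
  rfl

variable (G) in
lemma genProb_nonneg (k : ℕ) : 0 ≤ genProb G k := by
  unfold genProb
  positivity

variable (G) in
lemma genProb_eq_one_of_subsingleton [Subsingleton G] (k : ℕ) : genProb G k = 1 := by
  have hset : {v : Fin k → G | Subgroup.closure (Set.range v) = ⊤} = Set.univ :=
    Set.eq_univ_of_forall fun _ => Subsingleton.elim _ _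
  simp [genProb_eq_ncard_div, hset]

lemma genProb_quotient_le_add [Finite G] (N : Subgroup G) [IsMinimalNormal N]
    [IsMulCommutative N] (k : ℕ) :
    genProb (G ⧸ N) k ≤
      genProb G k + (Nat.card N : ℝ) ^ Group.rank (G ⧸ N) / (Nat.card N : ℝ) ^ k := by
  have hN : (0 : ℝ) < Nat.card N := Nat.cast_pos.2 Nat.card_pos
  have hQ : (0 : ℝ) < Nat.card (G ⧸ N) := Nat.cast_pos.2 Nat.card_pos
  have hcount := ncard_closure_range_quotient_eq_top_mul_le (ι := Fin k) N
  rw [Nat.card_fin] at hcount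
  rify at hcount
  rw [genProb_eq_ncard_div, genProb_eq_ncard_div,
    Subgroup.card_eq_card_quotient_mul_card_subgroup N, Nat.cast_mul, mul_pow]
  field_simp
  linarith

end Group

theorem one_sub_genProb_le (G : Type*) [Group G] [Finite G] [Group.IsSolvable G] (k : ℕ) :
    1 - genProb G k ≤ 2 ^ cardFactors (Nat.card G) / 2 ^ k := by
  induction hΩ : cardFactors (Nat.card G) using Nat.strong_induction_on generalizing G with
  | _ n ih =>
  rcases subsingleton_or_nontrivial G with hG | hG
  · rw [genProb_eq_one_of_subsingleton, sub_self]
    positivity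
  obtain ⟨N, hN⟩ := exists_isMinimalNormal G
  have := IsMinimalNormal.isMulCommutative N
  let m := cardFactors (Nat.card (G ⧸ N))
  have hmn : m < n := hΩ ▸ cardFactors_card_quotient_lt hN.ne_bot
  rcases lt_or_ge k m with hkm | hmk
  · have hpow : (1 : ℝ) ≤ 2 ^ n / 2 ^ k :=
      (one_le_div (by positivity)).2 (pow_le_pow_right₀ one_le_two (by omega))
    linarith [genProb_nonneg G k]
  have hcompl : (Nat.card N : ℝ) ^ Group.rank (G ⧸ N) / (Nat.card N : ℝ) ^ k ≤ 2 ^ m / 2 ^ k := by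
    have h2N : (2 : ℝ) ≤ Nat.card N := by exact_mod_cast N.one_lt_card_iff_ne_bot.2 hN.ne_bot
    calc _ ≤ (Nat.card N : ℝ) ^ m / (Nat.card N : ℝ) ^ k := by
          gcongr
          · linarith
          · exact rank_le_cardFactors_card (G ⧸ N)
      _ ≤ 2 ^ m / 2 ^ k := pow_div_pow_le_pow_div_pow two_pos h2N hmk
  calc 1 - genProb G k
      ≤ (1 - genProb (G ⧸ N) k) +
          (Nat.card N : ℝ) ^ Group.rank (G ⧸ N) / (Nat.card N : ℝ) ^ k := by
        linarith [genProb_quotient_le_add N k]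
    _ ≤ 2 ^ m / 2 ^ k + 2 ^ m / 2 ^ k := add_le_add (ih m hmn (G ⧸ N) rfl) hcompl
    _ = 2 ^ (m + 1) / 2 ^ k := by ring
    _ ≤ 2 ^ n / 2 ^ k :=
        div_le_div_of_nonneg_right (pow_le_pow_right₀ one_le_two hmn) (by positivity)

theorem nilpotent_genProb_len_bound_general (G : Type*) [Group G] [Finite G] [Group.IsSolvable G]
    (ε : ℝ) (hε0 : 0 < ε) (k : ℕ)
    (hk : (cardFactors (Nat.card G) : ℤ) + ⌈Real.logb 2 (1 / ε)⌉ ≤ (k : ℤ)) :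
    1 - ε ≤ genProb G k := by
  have hlog : Real.logb 2 (1 / ε) ≤ (k : ℝ) - cardFactors (Nat.card G) := by
    exact_mod_cast Int.ceil_le.1 (le_sub_iff_add_le'.2 hk)
  have hε : 1 / ε ≤ 2 ^ k / 2 ^ cardFactors (Nat.card G) := by
    rwa [Real.logb_le_iff_le_rpow one_lt_two (by positivity), Real.rpow_sub two_pos,
      Real.rpow_natCast, Real.rpow_natCast] at hlog
  have hfail : (2 : ℝ) ^ cardFactors (Nat.card G) / 2 ^ k ≤ ε := by
    rw [← inv_div]
    exact inv_le_of_inv_le₀ hε0 (by rwa [one_div] at hε)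
  linarith [one_sub_genProb_le G k]

theorem nilpotent_genProb_len_bound (G : Type*) [Group G] [Finite G] [Group.IsNilpotent G]
    (ε : ℝ) (hε0 : 0 < ε) (hε1 : ε < 1) (k : ℕ)
    (hk : ((Nat.card G).primeFactorsList.length : ℤ) + ⌈Real.logb 2 (1 / ε)⌉ ≤ (k : ℤ)) :
    1 - ε ≤ genProb G k :=
  nilpotent_genProb_len_bound_general G ε hε0 k hk
end

section
/- For every integer n ≥ 1 and every real 0 < ε < 1, the finite nilpotent group G = (ℤ/2ℤ)^n, which has composition length len(G) = n, satisfies φ_k(G) < 1 − ε when k = n + ⌈log₂(1/ε)⌉ − 2 (interpreting φ_k(G) with this value of k, which may be computed in ℤ; if k < 0 or the k-tuples never generate, φ_k(G) = 0). -/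
/-- `genProb` extended to integer values of `k`: it is `0` for negative `k`. -/
noncomputable def genProbZ (G : Type*) [Group G] (k : ℤ) : ℝ :=
  if 0 ≤ k then genProb G k.toNat else 0

/-!
A `k`-tuple in `(ℤ/pℤ)^n` is a `k × n` matrix over the field with `p` elements. It generates the
group iff its `k` rows span, that is, iff its `n` columns are linearly independent in `(ℤ/pℤ)^k`.
Counting linearly independent tuples gives `φ_k((ℤ/pℤ)^n) = ∏_{i < n} (1 - p^i / p^k)`, which for
`k ≥ n - 1` is at most its last factor. If `r = ⌈log_p (1/ε)⌉ - 1` and `k = n - 1 + r`, this factor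
is `1 - p^{-r}`, and `r < log_p (1/ε)` says exactly that `ε < p^{-r}`.
-/

open Module

lemma genProb_congr {G H : Type*} [Group G] [Group H] (e : G ≃* H) (k : ℕ) :
    genProb G k = genProb H k := by
  have hclosure (v : Fin k → G) :
      Subgroup.closure (Set.range v) = ⊤ ↔ Subgroup.closure (Set.range (e ∘ v)) = ⊤ := by
    rw [Set.range_comp, ← MonoidHom.coe_coe, ← MonoidHom.map_closure]
    exact (map_eq_top_iff e.mapSubgroup).symm
  have hcard : Nat.card {v : Fin k → G // Subgroup.closure (Set.range v) = ⊤} =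
      Nat.card {w : Fin k → H // Subgroup.closure (Set.range w) = ⊤} :=
    Nat.card_congr ((Equiv.piCongrRight fun _ ↦ e.toEquiv).subtypeEquiv hclosure)
  rw [genProb, genProb, Nat.card_congr e.toEquiv, hcard]

section Field

variable {K : Type*} [Field K]

lemma span_range_row_eq_top_iff_linearIndependent_col {m n : Type*} [Finite m] [Finite n]
    (M : Matrix m n K) :
    Submodule.span K (Set.range M.row) = ⊤ ↔ LinearIndependent K M.col := by
  have := Fintype.ofFinite m
  have := Fintype.ofFinite n
  have hrank : finrank K (Submodule.span K (Set.range M.row)) = (Set.range M.col).finrank K := by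
    rw [Set.finrank, ← M.rank_eq_finrank_span_row, M.rank_eq_finrank_span_cols]
  rw [linearIndependent_iff_card_eq_finrank_span, ← hrank, ← finrank_fintype_fun_eq_card K,
    ← finrank_top K (n → K)]
  exact ⟨fun h ↦ by rw [h], fun h ↦ Submodule.eq_top_of_finrank_eq (h.symm.trans (finrank_top K _))⟩

variable (K) in
lemma card_span_range_eq_top_eq_card_linearIndependent (m n : Type*) [Finite m] [Finite n] :
    Nat.card {v : m → n → K // Submodule.span K (Set.range v) = ⊤} =
      Nat.card {w : n → m → K // LinearIndependent K w} :=
  Nat.card_congr <| (Equiv.piComm fun _ _ ↦ K).subtypeEquiv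
    span_range_row_eq_top_iff_linearIndependent_col

lemma card_linearIndependent_eq_prod_sub [Finite K] {V : Type*} [AddCommGroup V] [Module K V]
    [Finite V] (n : ℕ) :
    (Nat.card {w : Fin n → V // LinearIndependent K w} : ℝ) =
      ∏ i : Fin n, ((Nat.card V : ℝ) - (Nat.card K : ℝ) ^ (i : ℕ)) := by
  have := Fintype.ofFinite K
  rw [Module.natCard_eq_pow_finrank (K := K) (V := V)]
  obtain hn | hn := le_or_gt n (finrank K V)
  · rw [card_linearIndependent hn, Nat.cast_prod]
    refine Finset.prod_congr rfl fun i _ ↦ ?_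
    rw [← Nat.card_eq_fintype_card,
      Nat.cast_sub (Nat.pow_le_pow_right Nat.card_pos (i.2.le.trans hn)), Nat.cast_pow,
      Nat.cast_pow]
  · have : IsEmpty {w : Fin n → V // LinearIndependent K w} :=
      ⟨fun w ↦ hn.not_ge (by simpa using w.2.fintype_card_le_finrank)⟩
    rw [Nat.card_of_isEmpty, Nat.cast_zero, eq_comm]
    exact Finset.prod_eq_zero (Finset.mem_univ ⟨finrank K V, hn⟩) (by simp)

end Field

section ElementaryAbelian

variable {V : Type*} [AddCommGroup V]

lemma toZModSubmodule_closure (m : ℕ) [Module (ZMod m) V] (s : Set V) :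
    AddSubgroup.toZModSubmodule m (AddSubgroup.closure s) = Submodule.span (ZMod m) s :=
  le_antisymm
    (show AddSubgroup.closure s ≤ (Submodule.span (ZMod m) s).toAddSubgroup from
      (AddSubgroup.closure_le _).2 Submodule.subset_span)
    (Submodule.span_le.2 AddSubgroup.subset_closure)

lemma closure_eq_top_iff_span_preimage_ofAdd_eq_top (m : ℕ) [Module (ZMod m) V]
    (s : Set (Multiplicative V)) :
    Subgroup.closure s = ⊤ ↔ Submodule.span (ZMod m) (Multiplicative.ofAdd ⁻¹' s) = ⊤ := by
  rw [← toZModSubmodule_closure, ← Subgroup.toAddSubgroup'_closure, map_eq_top_iff, map_eq_top_iff]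

lemma genProb_multiplicative (m : ℕ) [Module (ZMod m) V] (k : ℕ) :
    genProb (Multiplicative V) k =
      (Nat.card {v : Fin k → V // Submodule.span (ZMod m) (Set.range v) = ⊤} : ℝ) /
        (Nat.card V : ℝ) ^ k := by
  have hcard := Nat.card_congr <| Equiv.subtypeEquivRight fun v : Fin k → Multiplicative V ↦
    closure_eq_top_iff_span_preimage_ofAdd_eq_top m (Set.range v)
  rw [genProb, hcard]
  rfl

variable (p : ℕ) [Fact p.Prime]

theorem genProb_pi_zmod_eq_prod (n k : ℕ) :
    genProb (Fin n → Multiplicative (ZMod p)) k =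
      ∏ i : Fin n, (1 - (p : ℝ) ^ (i : ℕ) / (p : ℝ) ^ k) := by
  have hp : (p : ℝ) ≠ 0 := mod_cast (Fact.out : p.Prime).ne_zero
  rw [← genProb_congr (MulEquiv.piMultiplicative fun _ ↦ ZMod p), genProb_multiplicative p,
    card_span_range_eq_top_eq_card_linearIndependent, card_linearIndependent_eq_prod_sub]
  simp only [Nat.card_fun, Nat.card_zmod, Nat.card_fin, Nat.cast_pow]
  rw [pow_right_comm, ← Fin.prod_const n, ← Finset.prod_div_distrib]
  exact Finset.prod_congr rfl fun i _ ↦ by rw [sub_div, div_self (pow_ne_zero k hp)]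

lemma genProb_pi_zmod_succ_le {d k : ℕ} (hdk : d ≤ k) :
    genProb (Fin (d + 1) → Multiplicative (ZMod p)) k ≤ 1 - (p : ℝ) ^ d / (p : ℝ) ^ k := by
  have hp : (1 : ℝ) ≤ p := mod_cast (Fact.out : p.Prime).one_le
  have hfactor {i : ℕ} (hi : i ≤ d) : 0 ≤ 1 - (p : ℝ) ^ i / (p : ℝ) ^ k :=
    sub_nonneg.2 <| div_le_one_of_le₀ (pow_le_pow_right₀ hp (hi.trans hdk)) (by positivity)
  rw [genProb_pi_zmod_eq_prod, Fin.prod_univ_castSucc]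
  refine mul_le_of_le_one_left (hfactor le_rfl) (Finset.prod_le_one ?_ ?_)
  · exact fun i _ ↦ hfactor i.2.le
  · exact fun i _ ↦ sub_le_self _ (by positivity)

end ElementaryAbelian

lemma exists_ceil_logb_one_div_eq_succ {b ε : ℝ} (hb : 1 < b) (hε0 : 0 < ε) (hε1 : ε < 1) :
    ∃ r : ℕ, ⌈Real.logb b (1 / ε)⌉ = r + 1 ∧ ε < 1 / b ^ r := by
  have hlog : 0 < Real.logb b (1 / ε) := Real.logb_pos hb (one_lt_one_div hε0 hε1)
  obtain ⟨r, hr⟩ := Int.eq_ofNat_of_zero_le (Int.sub_nonneg.2 (Int.ceil_pos.2 hlog))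
  have hceil : ⌈Real.logb b (1 / ε)⌉ = r + 1 := by omega
  refine ⟨r, hceil, ?_⟩
  have hlt : (r : ℝ) < Real.logb b (1 / ε) := by
    exact_mod_cast Int.lt_ceil.1 (hceil ▸ Int.lt_succ (r : ℤ))
  rw [Real.lt_logb_iff_rpow_lt hb (by positivity), Real.rpow_natCast] at hlt
  exact (lt_one_div hε0 (by positivity)).2 hlt

theorem len_bound_tightness_general (p : ℕ) [Fact p.Prime] (n : ℕ) (hn : 1 ≤ n) (ε : ℝ)
    (hε0 : 0 < ε) (hε1 : ε < 1) :
    genProbZ (Fin n → Multiplicative (ZMod p)) ((n : ℤ) + ⌈Real.logb p (1 / ε)⌉ - 2) <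
      1 - ε := by
  have hp : (1 : ℝ) < p := mod_cast (Fact.out : p.Prime).one_lt
  obtain ⟨d, rfl⟩ := Nat.exists_eq_add_of_le' hn
  obtain ⟨r, hceil, hε⟩ := exists_ceil_logb_one_div_eq_succ hp hε0 hε1
  have hk : ((d + 1 : ℕ) : ℤ) + ⌈Real.logb p (1 / ε)⌉ - 2 = (d + r : ℕ) := by
    rw [hceil]
    push_cast
    ring
  rw [hk, genProbZ, if_pos (Int.natCast_nonneg _), Int.toNat_natCast]
  calc genProb (Fin (d + 1) → Multiplicative (ZMod p)) (d + r)
      ≤ 1 - (p : ℝ) ^ d / (p : ℝ) ^ (d + r) := genProb_pi_zmod_succ_le p (d.le_add_right r)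
    _ = 1 - 1 / (p : ℝ) ^ r := by rw [pow_add, div_mul_eq_div_div, div_self (by positivity)]
    _ < 1 - ε := sub_lt_sub_left hε 1

theorem len_bound_tightness (n : ℕ) (hn : 1 ≤ n) (ε : ℝ) (hε0 : 0 < ε) (hε1 : ε < 1) :
    genProbZ (Fin n → Multiplicative (ZMod 2)) ((n : ℤ) + ⌈Real.logb 2 (1 / ε)⌉ - 2) <
      1 - ε :=
  mod_cast len_bound_tightness_general 2 n hn ε hε0 hε1
end

section
/- Let G be a finite abelian group, let H ≤ G be a subgroup, and let 0 < ε < 1 be real. If k is a natural number with k ≥ rank(G) + ⌈log₂(2/ε)⌉, then φ_k(G/H) ≥ 1 − ε. -/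
/-!
A tuple that fails to generate a finite nilpotent group `G` lies in a maximal subgroup, which is
normal of prime index `p`, hence in the kernel of a nontrivial homomorphism `χ : G → ℤ/p`. There are
at most `p ^ rank G` such `χ`, each killing a `p ^ (-k)` fraction of the tuples; and a tuple killed
by `χ` is also killed by the `p - 1` powers `χ, χ², …, χ ^ (p - 1)`. For `k > rank G` the failure
probability is thus at most
`∑ p ^ (rank G - k) / (p - 1) ≤ 2 ^ (rank G + 1 - k) * ∑ 1 / (p * (p - 1))`,
and the last sum telescopes to at most `1`.
-/

theorem zpow_le_zpow_left_of_nonpos {α : Type*} [Field α] [LinearOrder α] [IsStrictOrderedRing α]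
    {a b : α} {n : ℤ} (hn : n ≤ 0) (ha : 0 < a) (hab : a ≤ b) : b ^ n ≤ a ^ n := by
  have hneg : a ^ (-n) ≤ b ^ (-n) := zpow_le_zpow_left₀ (neg_nonneg.2 hn) ha.le hab
  simpa only [zpow_neg, inv_inv] using inv_anti₀ (zpow_pos ha (-n)) hneg

theorem sum_one_div_mul_pred_le_one {s : Finset ℕ} (hs : ∀ n ∈ s, 2 ≤ n) :
    ∑ n ∈ s, 1 / ((n : ℝ) * (n - 1)) ≤ 1 := by
  let N := s.sup id
  have hsub : s ⊆ Finset.Ico 2 (N + 2) := fun n hn => by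
    have hle : n ≤ N := Finset.le_sup (f := id) hn
    exact Finset.mem_Ico.2 ⟨hs n hn, by lia⟩
  calc ∑ n ∈ s, 1 / ((n : ℝ) * (n - 1))
      ≤ ∑ n ∈ Finset.Ico 2 (N + 2), 1 / ((n : ℝ) * (n - 1)) := by
        refine Finset.sum_le_sum_of_subset_of_nonneg hsub fun n hn _ => ?_
        have hn2 : (2 : ℝ) ≤ n := by exact_mod_cast (Finset.mem_Ico.1 hn).1
        exact one_div_nonneg.2 (mul_nonneg (by linarith) (by linarith))
    _ = ∑ m ∈ Finset.range N, (1 / ((m : ℝ) + 1) - 1 / ((m + 1 : ℕ) + 1)) := by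
        rw [Finset.sum_Ico_eq_sum_range, Nat.add_sub_cancel]
        refine Finset.sum_congr rfl fun m _ => ?_
        push_cast
        have hpred : (2 : ℝ) + m - 1 = m + 1 := by ring
        rw [hpred]
        field_simp
        ring
    _ = 1 - 1 / ((N : ℝ) + 1) := by
        rw [Finset.sum_range_sub' fun m : ℕ => 1 / ((m : ℝ) + 1)]
        simp
    _ ≤ 1 := sub_le_self _ (by positivity)

section Homomorphisms

variable {G : Type*} [Group G]

theorem exists_ne_one_le_ker_of_ne_top [Finite G] [Group.IsNilpotent G] {S : Subgroup G}
    (hS : S ≠ ⊤) :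
    ∃ p ∈ (Nat.card G).primeFactors, ∃ χ : G →* Multiplicative (ZMod p), χ ≠ 1 ∧ S ≤ χ.ker := by
  obtain ⟨M, hM, hSM⟩ := (eq_top_or_exists_le_coatom S).resolve_left hS
  have : M.Normal := Subgroup.NormalizerCondition.normal_of_coatom M
    Group.normalizerCondition_of_isNilpotent hM
  have : IsSimpleGroup (G ⧸ M) := isSimpleGroup_quotient_of_isCoatom hM
  let e : G ⧸ M ≃* Multiplicative (ZMod (Nat.card (G ⧸ M))) :=
    (zmodCyclicMulEquiv inferInstance).symm
  let χ : G →* Multiplicative (ZMod (Nat.card (G ⧸ M))) := e.toMonoidHom.comp (QuotientGroup.mk' M)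
  have hker : χ.ker = M :=
    (MonoidHom.ker_mulEquiv_comp (QuotientGroup.mk' M) e).trans (QuotientGroup.ker_mk' M)
  refine ⟨Nat.card (G ⧸ M), ?_, χ, ?_, hSM.trans hker.ge⟩
  · exact Nat.mem_primeFactors.2
      ⟨IsSimpleGroup.prime_card, M.card_quotient_dvd_card, Nat.card_pos.ne'⟩
  · intro hχ
    exact hM.1 (hker.symm.trans (MonoidHom.ker_eq_top_iff.2 hχ))

theorem card_monoidHom_le_pow_rank (G M : Type*) [Group G] [Group.FG G] [Monoid M] [Finite M] :
    Nat.card (G →* M) ≤ Nat.card M ^ Group.rank G := by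
  obtain ⟨S, hcard, hS⟩ := Group.rank_spec G
  have hinj : Function.Injective fun (f : G →* M) (s : S) => f s := fun f g h =>
    MonoidHom.eq_of_eqOn_dense hS fun x hx => congrFun h ⟨x, hx⟩
  simpa [Nat.card_fun, hcard] using Nat.card_le_card_of_injective _ hinj

theorem orderOf_monoidHom_of_prime_card {C : Type*} [CommGroup C] (hC : (Nat.card C).Prime)
    {χ : G →* C} (hχ : χ ≠ 1) : orderOf χ = Nat.card C :=
  have : Fact (Nat.card C).Prime := ⟨hC⟩
  orderOf_eq_prime (MonoidHom.ext fun g => pow_card_eq_one' (x := χ g)) hχ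

theorem card_ker_mul_card_of_prime_card {C : Type*} [Group C] (hC : (Nat.card C).Prime)
    {χ : G →* C} (hχ : χ ≠ 1) : Nat.card χ.ker * Nat.card C = Nat.card G := by
  have : Fact (Nat.card C).Prime := ⟨hC⟩
  have hrange : χ.range = ⊤ := χ.range.eq_bot_or_eq_top_of_prime_card.resolve_left
    (mt MonoidHom.range_eq_bot_iff.1 hχ)
  rw [← χ.ker.card_mul_index, Subgroup.index_ker, hrange, Subgroup.card_top]

end Homomorphisms

section Tuples

/-- The `k`-tuples of elements of `G` all of whose entries are killed by one common nontrivial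
homomorphism from `G` to the cyclic group of order `p`. -/
def annihilatedTuples (G : Type*) [Group G] (k p : ℕ) : Set (Fin k → G) :=
  {v | ∃ χ : G →* Multiplicative (ZMod p), χ ≠ 1 ∧ ∀ i, χ (v i) = 1}

theorem ncard_setOf_forall_mem {α : Type*} (S : Set α) (k : ℕ) :
    {v : Fin k → α | ∀ i, v i ∈ S}.ncard = S.ncard ^ k := by
  let e : {v : Fin k → α // ∀ i, v i ∈ S} ≃ (Fin k → S) := Equiv.subtypePiEquivPi
  exact (Nat.card_congr e).trans (by rw [Nat.card_fun, Nat.card_fin, Nat.card_coe_set_eq])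

variable (G : Type*) [Group G] [Finite G] (k : ℕ)

theorem ncard_annihilatedTuples_mul_le (p : ℕ) [Fact p.Prime] :
    (annihilatedTuples G k p).ncard * (p - 1) ≤ p ^ Group.rank G * (Nat.card G / p) ^ k := by
  classical
  have hp : p.Prime := Fact.out
  have : Finite (G →* Multiplicative (ZMod p)) := .of_injective _ DFunLike.coe_injective
  have := Fintype.ofFinite (G →* Multiplicative (ZMod p))
  have := Fintype.ofFinite G
  have hcyclic : Nat.card (Multiplicative (ZMod p)) = p := by simp
  have hprime : (Nat.card (Multiplicative (ZMod p))).Prime := hcyclic.symm ▸ hp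
  let kills (v : Fin k → G) (χ : G →* Multiplicative (ZMod p)) : Prop := ∀ i, χ (v i) = 1
  let nontrivialHoms : Finset (G →* Multiplicative (ZMod p)) := {χ | χ ≠ 1}
  have hhoms : nontrivialHoms.card ≤ p ^ Group.rank G := by
    refine (Finset.card_le_univ _).trans ?_
    simpa using card_monoidHom_le_pow_rank G (Multiplicative (ZMod p))
  have hpowers (v) (hv : v ∈ (annihilatedTuples G k p).toFinset) :
      p - 1 ≤ (nontrivialHoms.bipartiteAbove kills v).card := by
    obtain ⟨χ, hχ, hχv⟩ := Set.mem_toFinset.1 hv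
    have hord : orderOf χ = p := (orderOf_monoidHom_of_prime_card hprime hχ).trans hcyclic
    have hexponents : p - 1 = (Finset.Ioo 0 p).card := by simp
    refine hexponents.trans_le (Finset.card_le_card_of_injOn (χ ^ ·) (fun j hj => ?_) ?_)
    · have hj' := Finset.mem_Ioo.1 hj
      have hne : χ ^ j ≠ 1 := pow_ne_one_of_lt_orderOf hj'.1.ne' (hord.symm ▸ hj'.2)
      simp [Finset.bipartiteAbove, nontrivialHoms, kills, hne, hχv]
    · exact pow_injOn_Iio_orderOf.mono fun j hj => hord.symm ▸ (Finset.mem_Ioo.1 hj).2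
  have hkilled (χ) (hχ : χ ∈ nontrivialHoms) :
      ((annihilatedTuples G k p).toFinset.bipartiteBelow kills χ).card ≤
        (Nat.card G / p) ^ k := by
    have hker : (χ.ker : Set G).ncard = Nat.card G / p := by
      rw [← card_ker_mul_card_of_prime_card hprime (Finset.mem_filter.1 hχ).2, hcyclic,
        Nat.mul_div_cancel _ hp.pos]
      exact (Nat.card_coe_set_eq _).symm
    rw [← hker, ← ncard_setOf_forall_mem, ← Set.ncard_coe_finset]
    exact Set.ncard_le_ncard fun v hv => (Finset.mem_filter.1 hv).2
  calc (annihilatedTuples G k p).ncard * (p - 1)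
      = (annihilatedTuples G k p).toFinset.card * (p - 1) := by rw [Set.ncard_eq_toFinset_card']
    _ ≤ nontrivialHoms.card * (Nat.card G / p) ^ k :=
        Finset.card_mul_le_card_mul kills hpowers hkilled
    _ ≤ p ^ Group.rank G * (Nat.card G / p) ^ k := Nat.mul_le_mul_right _ hhoms

theorem ncard_annihilatedTuples_div_le (p : ℕ) [Fact p.Prime] :
    (annihilatedTuples G k p).ncard / (Nat.card G : ℝ) ^ k ≤
      (p : ℝ) ^ (Group.rank G + 1 - k : ℤ) * (1 / (p * (p - 1))) := by
  have hp : p.Prime := Fact.out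
  have hp0 : (0 : ℝ) < p := Nat.cast_pos.2 hp.pos
  have hp1 : (0 : ℝ) < p - 1 := sub_pos.2 (Nat.one_lt_cast.2 hp.one_lt)
  have hG : (0 : ℝ) < Nat.card G := Nat.cast_pos.2 Nat.card_pos
  have hcount : (annihilatedTuples G k p).ncard * ((p : ℝ) - 1) ≤
      p ^ Group.rank G * (Nat.card G / p) ^ k := by
    calc (annihilatedTuples G k p).ncard * ((p : ℝ) - 1)
        ≤ p ^ Group.rank G * ((Nat.card G / p : ℕ) : ℝ) ^ k := by
          rw [← Nat.cast_pred hp.pos]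
          exact_mod_cast ncard_annihilatedTuples_mul_le G k p
      _ ≤ p ^ Group.rank G * (Nat.card G / p) ^ k := by
          gcongr
          exact Nat.cast_div_le
  calc (annihilatedTuples G k p).ncard / (Nat.card G : ℝ) ^ k
      ≤ p ^ Group.rank G * (Nat.card G / p) ^ k / (p - 1) / (Nat.card G : ℝ) ^ k := by
        gcongr
        exact (le_div_iff₀ hp1).2 hcount
    _ = (p : ℝ) ^ (Group.rank G + 1 - k : ℤ) * (1 / (p * (p - 1))) := by
        rw [zpow_sub₀ hp0.ne', zpow_add_one₀ hp0.ne', zpow_natCast, zpow_natCast, div_pow]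
        field_simp

variable [Group.IsNilpotent G]

theorem one_sub_genProb_le_sum :
    1 - genProb G k ≤
      ∑ p ∈ (Nat.card G).primeFactors, (annihilatedTuples G k p).ncard / (Nat.card G : ℝ) ^ k := by
  have hpos : (0 : ℝ) < Nat.card G ^ k := by have := Nat.card_pos (α := G); positivity
  let generating : Set (Fin k → G) := {v | Subgroup.closure (Set.range v) = ⊤}
  have hunion : generatingᶜ ⊆ ⋃ p ∈ (Nat.card G).primeFactors, annihilatedTuples G k p := by
    intro v hv
    obtain ⟨p, hp, χ, hχ, hle⟩ := exists_ne_one_le_ker_of_ne_top hv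
    exact Set.mem_biUnion hp ⟨χ, hχ, fun i => hle (Subgroup.subset_closure ⟨i, rfl⟩)⟩
  have hcard : (Nat.card G : ℝ) ^ k ≤
      generating.ncard + ∑ p ∈ (Nat.card G).primeFactors, (annihilatedTuples G k p).ncard := by
    have hcompl : generating.ncard + generatingᶜ.ncard = Nat.card G ^ k := by
      rw [Set.ncard_add_ncard_compl, Nat.card_fun, Nat.card_fin]
    have hbound := (Set.ncard_le_ncard hunion).trans (Finset.set_ncard_biUnion_le _ _)
    exact_mod_cast hcompl.symm.le.trans (Nat.add_le_add_left hbound _)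
  have hgen : genProb G k = generating.ncard / (Nat.card G : ℝ) ^ k := rfl
  rw [hgen, ← Finset.sum_div, sub_le_iff_le_add, ← add_div, one_le_div hpos, add_comm]
  exact_mod_cast hcard

theorem one_sub_two_zpow_le_genProb :
    1 - (2 : ℝ) ^ (Group.rank G + 1 - k : ℤ) ≤ genProb G k := by
  rcases le_total (Group.rank G + 1 - k : ℤ) 0 with hnonpos | hnonneg
  · have hterm (p) (hp : p ∈ (Nat.card G).primeFactors) :
        (annihilatedTuples G k p).ncard / (Nat.card G : ℝ) ^ k ≤
          2 ^ (Group.rank G + 1 - k : ℤ) * (1 / ((p : ℝ) * (p - 1))) := by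
      have hprime : p.Prime := Nat.prime_of_mem_primeFactors hp
      have : Fact p.Prime := ⟨hprime⟩
      have hp2 : (2 : ℝ) ≤ p := by exact_mod_cast hprime.two_le
      have hp1 : (0 : ℝ) < p - 1 := by linarith
      refine (ncard_annihilatedTuples_div_le G k p).trans ?_
      gcongr ?_ * _
      exact zpow_le_zpow_left_of_nonpos hnonpos two_pos hp2
    have hsum : ∑ p ∈ (Nat.card G).primeFactors, 1 / ((p : ℝ) * (p - 1)) ≤ 1 :=
      sum_one_div_mul_pred_le_one fun p hp => (Nat.prime_of_mem_primeFactors hp).two_le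
    rw [sub_le_comm]
    calc 1 - genProb G k
        ≤ ∑ p ∈ (Nat.card G).primeFactors,
            (annihilatedTuples G k p).ncard / (Nat.card G : ℝ) ^ k := one_sub_genProb_le_sum G k
      _ ≤ ∑ p ∈ (Nat.card G).primeFactors,
            2 ^ (Group.rank G + 1 - k : ℤ) * (1 / ((p : ℝ) * (p - 1))) := Finset.sum_le_sum hterm
      _ ≤ 2 ^ (Group.rank G + 1 - k : ℤ) := by
          rw [← Finset.mul_sum]
          exact mul_le_of_le_one_right (by positivity) hsum
  · calc 1 - (2 : ℝ) ^ (Group.rank G + 1 - k : ℤ)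
        ≤ 0 := sub_nonpos.2 (one_le_zpow₀ one_le_two hnonneg)
      _ ≤ genProb G k := by rw [genProb]; positivity

end Tuples

theorem ahsp_rank_bound_general (G : Type*) [Group G] [Group.FG G] (H : Subgroup G) [H.Normal]
    [H.FiniteIndex] [Group.IsNilpotent (G ⧸ H)] (ε : ℝ) (hε : 0 < ε) (k : ℕ)
    (hk : (Group.rank G : ℤ) + ⌈Real.logb 2 (2 / ε)⌉ ≤ (k : ℤ)) :
    1 - ε ≤ genProb (G ⧸ H) k := by
  have hrank : Group.rank (G ⧸ H) ≤ Group.rank G :=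
    Group.rank_le_of_surjective _ (QuotientGroup.mk'_surjective H)
  have hlog : Real.logb 2 (2 / ε) ≤ ((k - Group.rank (G ⧸ H) : ℤ) : ℝ) :=
    Int.ceil_le.1 (by lia)
  have hpow : 2 / ε ≤ (2 : ℝ) ^ (k - Group.rank (G ⧸ H) : ℤ) := by
    rwa [Real.logb_le_iff_le_rpow one_lt_two (by positivity), Real.rpow_intCast] at hlog
  have hε' : (2 : ℝ) ^ (Group.rank (G ⧸ H) + 1 - k : ℤ) ≤ ε := by
    have hexp : (Group.rank (G ⧸ H) + 1 - k : ℤ) = 1 - (k - Group.rank (G ⧸ H)) := by ring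
    rw [hexp, zpow_sub₀ two_ne_zero, zpow_one]
    exact (div_le_comm₀ hε (by positivity)).1 hpow
  linarith [one_sub_two_zpow_le_genProb (G ⧸ H) k]

theorem ahsp_rank_bound (G : Type*) [CommGroup G] [Finite G] (H : Subgroup G)
    (ε : ℝ) (hε0 : 0 < ε) (hε1 : ε < 1) (k : ℕ)
    (hk : (Group.rank G : ℤ) + ⌈Real.logb 2 (2 / ε)⌉ ≤ (k : ℤ)) :
    1 - ε ≤ genProb (G ⧸ H) k :=
  ahsp_rank_bound_general G H ε hε0 k hk
end

section
/- Let G be a finite abelian group, let H ≤ G be a subgroup, and let 0 < ε < 1 be real. If k is a natural number with k ≥ Ω(|G|) − Ω(|H|) + ⌈log₂(1/ε)⌉, then φ_k(G/H) ≥ 1 − ε. -/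
/-!
Adjoin the random elements one at a time, starting from the trivial subgroup, and follow the
potential `2 ^ Ω(index) - 1` of the subgroup generated so far. It vanishes only at the whole group
and is at least `1` elsewhere, so its expectation bounds the probability of not generating. A random
element lies in the current subgroup `K` with probability `1 / index K ≤ 2 ^ (-Ω(index K))`, and
otherwise `Ω(index)` drops by at least one; hence each step at least halves the potential in
expectation, and after `k` steps the failure probability is at most `(2 ^ Ω(|G|) - 1) / 2 ^ k`.
-/

open Subgroup
open scoped BigOperators ArithmeticFunction.Omega

theorem two_pow_cardFactors_le {n : ℕ} (hn : n ≠ 0) : 2 ^ Ω n ≤ n := by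
  calc 2 ^ Ω n ≤ n.primeFactorsList.prod :=
        List.pow_card_le_prod _ _ fun _ hp => (Nat.prime_of_mem_primeFactorsList hp).two_le
    _ = n := Nat.prod_primeFactorsList hn

theorem two_pow_div_two_pow_le_of_add_ceil_logb_le {n k : ℕ} {ε : ℝ} (hε : 0 < ε)
    (h : (n : ℤ) + ⌈Real.logb 2 (1 / ε)⌉ ≤ k) : (2 : ℝ) ^ n / 2 ^ k ≤ ε := by
  have hceil : ⌈Real.logb 2 (1 / ε)⌉ ≤ (k : ℤ) - n := le_sub_iff_add_le'.mpr h
  have hlog : Real.logb 2 (1 / ε) ≤ (k : ℝ) - n := by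
    exact_mod_cast Int.ceil_le.mp hceil
  rw [Real.logb_le_iff_le_rpow one_lt_two (by positivity), Real.rpow_sub two_pos,
    Real.rpow_natCast, Real.rpow_natCast] at hlog
  simpa using one_div_le_one_div_of_le (by positivity) hlog

section Index

variable {G : Type*} [Group G]

theorem cardFactors_index_lt_of_lt {K L : Subgroup G} [K.FiniteIndex] (h : K < L) :
    Ω L.index < Ω K.index := by
  have : L.FiniteIndex := finiteIndex_of_le h.le
  have hmul : K.relIndex L * L.index = K.index := relIndex_mul_index h.le
  have hrel0 : K.relIndex L ≠ 0 := left_ne_zero_of_mul (hmul ▸ FiniteIndex.index_ne_zero)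
  have hrel1 : K.relIndex L ≠ 1 := fun h1 => h.not_ge (relIndex_eq_one.mp h1)
  have hrel : 0 < Ω (K.relIndex L) :=
    ArithmeticFunction.cardFactors_pos_iff_one_lt.mpr (by lia)
  rw [← hmul, ArithmeticFunction.cardFactors_mul hrel0 FiniteIndex.index_ne_zero]
  lia

theorem cardFactors_card_eq_quotient_add_subgroup [Finite G] (H : Subgroup G) :
    Ω (Nat.card G) = Ω (Nat.card (G ⧸ H)) + Ω (Nat.card H) := by
  rw [H.card_eq_card_quotient_mul_card_subgroup,
    ArithmeticFunction.cardFactors_mul Nat.card_pos.ne' Nat.card_pos.ne']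

theorem expect_ite_mem_eq_inv_index {𝕜 : Type*} [Semifield 𝕜] [CharZero 𝕜] [Fintype G]
    (K : Subgroup G) [DecidablePred (· ∈ K)] :
    𝔼 g : G, (if g ∈ K then 1 else 0 : 𝕜) = (K.index : 𝕜)⁻¹ := by
  have hK : (Nat.card K : 𝕜) ≠ 0 := mod_cast Nat.card_pos.ne'
  rw [Fintype.expect_eq_sum_div_card, Finset.sum_boole, ← Fintype.card_subtype,
    ← Nat.card_eq_fintype_card, ← Nat.card_eq_fintype_card, ← K.card_mul_index, Nat.cast_mul]
  exact div_mul_cancel_left₀ hK _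

/-- The potential of the subgroup `K`, measuring how far `K` is from the whole group; adjoining a
random element at least halves it in expectation. Without the term `-1` the halving fails, for
instance at `K = ⊤`. For `K` of infinite index it takes the junk value `0`. -/
noncomputable def indexPotential (K : Subgroup G) : ℝ :=
  2 ^ Ω K.index - 1

theorem indexPotential_nonneg (K : Subgroup G) : 0 ≤ indexPotential K :=
  sub_nonneg.mpr (one_le_pow₀ one_le_two)

theorem one_le_indexPotential {K : Subgroup G} [K.FiniteIndex] (hK : K ≠ ⊤) :
    1 ≤ indexPotential K := by
  have hpow : (2 : ℝ) ^ 1 ≤ 2 ^ Ω K.index :=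
    pow_le_pow_right₀ one_le_two (Nat.one_le_of_lt (cardFactors_index_lt_of_lt hK.lt_top))
  unfold indexPotential
  linarith

theorem indexPotential_sup_zpowers_le (K : Subgroup G) [K.FiniteIndex] [DecidablePred (· ∈ K)]
    (g : G) :
    indexPotential (K ⊔ zpowers g) ≤
      2 ^ Ω K.index / 2 * (1 + if g ∈ K then 1 else 0) - 1 := by
  unfold indexPotential
  split_ifs with hg
  · rw [sup_eq_left.mpr (zpowers_le.mpr hg)]
    linarith
  · have hlt : K < K ⊔ zpowers g := left_lt_sup.mpr fun hle => hg (zpowers_le.mp hle)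
    have hpow : (2 : ℝ) ^ (Ω (K ⊔ zpowers g).index + 1) ≤ 2 ^ Ω K.index :=
      pow_le_pow_right₀ one_le_two (cardFactors_index_lt_of_lt hlt)
    rw [pow_succ] at hpow
    linarith

theorem expect_indexPotential_sup_zpowers_le [Fintype G] (K : Subgroup G) :
    𝔼 g : G, indexPotential (K ⊔ zpowers g) ≤ indexPotential K / 2 := by
  classical
  have hpos : (0 : ℝ) < K.index := mod_cast Nat.pos_of_ne_zero FiniteIndex.index_ne_zero
  have hindex : (2 : ℝ) ^ Ω K.index * (K.index : ℝ)⁻¹ ≤ 1 :=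
    mul_inv_le_one_of_le₀ (mod_cast two_pow_cardFactors_le FiniteIndex.index_ne_zero) hpos.le
  calc 𝔼 g : G, indexPotential (K ⊔ zpowers g)
      ≤ 𝔼 g : G, ((2 : ℝ) ^ Ω K.index / 2 * (1 + if g ∈ K then 1 else 0) - 1) :=
        Finset.expect_le_expect fun g _ => indexPotential_sup_zpowers_le K g
    _ = (2 : ℝ) ^ Ω K.index / 2 * (1 + (K.index : ℝ)⁻¹) - 1 := by
        rw [Finset.expect_sub_distrib, ← Finset.mul_expect, Finset.expect_add_distrib,
          expect_ite_mem_eq_inv_index, Fintype.expect_one]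
    _ ≤ indexPotential K / 2 := by
        unfold indexPotential
        linarith

end Index

section NonGeneration

variable {G : Type*} [Group G]

/-- `nonGenProb K k` is the probability that the subgroup `K` and `k` independently and uniformly
chosen random elements of the finite group `G` together fail to generate `G`. Allowing an
arbitrary `K` makes an induction on `k` possible. -/
noncomputable def nonGenProb (K : Subgroup G) (k : ℕ) : ℝ :=
  (Nat.card {v : Fin k → G // K ⊔ closure (Set.range v) ≠ ⊤} : ℝ) / (Nat.card G : ℝ) ^ k

theorem nonGenProb_zero_le_indexPotential (K : Subgroup G) [K.FiniteIndex] :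
    nonGenProb K 0 ≤ indexPotential K := by
  rcases eq_or_ne K ⊤ with rfl | hK
  · simpa [nonGenProb] using indexPotential_nonneg (⊤ : Subgroup G)
  · simpa [nonGenProb, hK] using one_le_indexPotential hK

theorem nonGenProb_succ [Fintype G] (K : Subgroup G) (k : ℕ) :
    nonGenProb K (k + 1) = 𝔼 g : G, nonGenProb (K ⊔ zpowers g) k := by
  have hsup (g : G) (v : Fin k → G) :
      K ⊔ closure (Set.range (Fin.cons g v : Fin (k + 1) → G)) =
        K ⊔ zpowers g ⊔ closure (Set.range v) := by
    rw [Fin.range_cons, Set.insert_eq, Subgroup.closure_union, zpowers_eq_closure, sup_assoc]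
  let e : {v : Fin (k + 1) → G // K ⊔ closure (Set.range v) ≠ ⊤} ≃
      Σ g : G, {v : Fin k → G // K ⊔ zpowers g ⊔ closure (Set.range v) ≠ ⊤} :=
    ((Fin.consEquiv fun _ => G).subtypeEquiv fun x => by
      rw [← hsup x.1 x.2]; rfl).symm.trans
      (Equiv.subtypeProdEquivSigmaSubtype fun (g : G) (v : Fin k → G) =>
        K ⊔ zpowers g ⊔ closure (Set.range v) ≠ ⊤)
  simp only [nonGenProb]
  rw [Nat.card_congr e, Nat.card_sigma, Nat.cast_sum, ← Finset.expect_div,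
    Fintype.expect_eq_sum_div_card, ← Nat.card_eq_fintype_card, div_div, pow_succ']

theorem nonGenProb_le_indexPotential_div_two_pow [Finite G] (K : Subgroup G) (k : ℕ) :
    nonGenProb K k ≤ indexPotential K / 2 ^ k := by
  have := Fintype.ofFinite G
  induction k generalizing K with
  | zero => simpa using nonGenProb_zero_le_indexPotential K
  | succ k ih =>
    calc nonGenProb K (k + 1)
        = 𝔼 g : G, nonGenProb (K ⊔ zpowers g) k := nonGenProb_succ K k
      _ ≤ 𝔼 g : G, indexPotential (K ⊔ zpowers g) / 2 ^ k :=
          Finset.expect_le_expect fun g _ => ih (K ⊔ zpowers g)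
      _ = (𝔼 g : G, indexPotential (K ⊔ zpowers g)) / 2 ^ k := (Finset.expect_div ..).symm
      _ ≤ indexPotential K / 2 / 2 ^ k := by
          gcongr
          exact expect_indexPotential_sup_zpowers_le K
      _ = indexPotential K / 2 ^ (k + 1) := by rw [div_div, pow_succ']

end NonGeneration

section Generation

variable (G : Type*) [Group G] [Finite G] (k : ℕ)

theorem genProb_add_nonGenProb_bot : genProb G k + nonGenProb (⊥ : Subgroup G) k = 1 := by
  classical
  have hcount : Nat.card {v : Fin k → G // closure (Set.range v) = ⊤} +
      Nat.card {v : Fin k → G // closure (Set.range v) ≠ ⊤} = Nat.card G ^ k := by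
    rw [← Nat.card_sum, Nat.card_congr (Equiv.sumCompl _), Nat.card_fun, Nat.card_fin]
  have hpos : (Nat.card G : ℝ) ^ k ≠ 0 := pow_ne_zero _ (mod_cast Nat.card_pos.ne')
  simp only [genProb, nonGenProb, bot_sup_eq]
  rw [← add_div, div_eq_one_iff_eq hpos]
  exact_mod_cast hcount

theorem one_sub_two_pow_cardFactors_sub_one_div_le_genProb :
    1 - ((2 : ℝ) ^ Ω (Nat.card G) - 1) / 2 ^ k ≤ genProb G k := by
  have hfail := nonGenProb_le_indexPotential_div_two_pow (⊥ : Subgroup G) k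
  rw [indexPotential, index_bot] at hfail
  linarith [genProb_add_nonGenProb_bot G k]

end Generation

theorem ahsp_len_bound_general (G : Type*) [Group G] [Finite G] (H : Subgroup G) [H.Normal]
    (ε : ℝ) (hε0 : 0 < ε) (k : ℕ)
    (hk : ((Nat.card G).primeFactorsList.length : ℤ) -
        ((Nat.card H).primeFactorsList.length : ℤ) + ⌈Real.logb 2 (1 / ε)⌉ ≤ (k : ℤ)) :
    1 - ε ≤ genProb (G ⧸ H) k := by
  simp only [← ArithmeticFunction.cardFactors_apply] at hk
  rw [cardFactors_card_eq_quotient_add_subgroup H, Nat.cast_add, add_sub_cancel_right] at hk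
  calc 1 - ε ≤ 1 - (2 : ℝ) ^ Ω (Nat.card (G ⧸ H)) / 2 ^ k := by
        gcongr
        exact two_pow_div_two_pow_le_of_add_ceil_logb_le hε0 hk
    _ ≤ 1 - ((2 : ℝ) ^ Ω (Nat.card (G ⧸ H)) - 1) / 2 ^ k := by
        gcongr
        exact sub_le_self _ zero_le_one
    _ ≤ genProb (G ⧸ H) k := one_sub_two_pow_cardFactors_sub_one_div_le_genProb (G ⧸ H) k

theorem ahsp_len_bound (G : Type*) [CommGroup G] [Finite G] (H : Subgroup G)
    (ε : ℝ) (hε0 : 0 < ε) (hε1 : ε < 1) (k : ℕ)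
    (hk : ((Nat.card G).primeFactorsList.length : ℤ) -
        ((Nat.card H).primeFactorsList.length : ℤ) + ⌈Real.logb 2 (1 / ε)⌉ ≤ (k : ℤ)) :
    1 - ε ≤ genProb (G ⧸ H) k :=
  ahsp_len_bound_general G H ε hε0 k hk
end
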